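/- arXiv:2007.05516 — 3 statements merged into one kernel-verified Lean document; each statement's English description precedes it below -/
import Mathlib

section
/- In a discrete causal Bayesian network in which every conditional probability table follows the linear edge-flow model, if the edge-unfairness weight w_{A→X} equals zero for every unfair edge A→X (i.e., for every variable X and every parent A of X lying in the sensitive set S), then the interventional distribution of any non-sensitive target variable Y is independent of the value intervened on: P(Y=y | do(S=s)) = P(Y=y | do(S=s')) for all assignments s, s' of values to S and every value y of Y. -/
open scoped Classical

/-- The interventional probability `P(Y = y | do(S = s))` given by the truncated
factorization: the sum over all full assignments `v` with `v|_S = s` and `v Y = y` of the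
product over variables `i ∉ S` of `c i (v|_{Pa i}) (v i)`. -/
noncomputable def doProb {n : ℕ} (α : Fin n → Type) [∀ i, Fintype (α i)]
    (Pa : Fin n → Finset (Fin n))
    (c : ∀ i : Fin n, (∀ j, j ∈ Pa i → α j) → α i → ℝ)
    (S : Finset (Fin n)) (s : ∀ j, j ∈ S → α j)
    (Y : Fin n) (y : α Y) : ℝ :=
  ∑ v : ∀ j : Fin n, α j,
    if (∀ j (h : j ∈ S), v j = s j h) ∧ v Y = y
    then ∏ i ∈ Sᶜ, c i (fun j _ => v j) (v i) else 0

/-- In a discrete causal Bayesian network (variables indexed by `Fin n` with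
finite nonempty value types `α i`, parent sets `Pa i ⊆ {j | j < i}` and CPTs `c i`) in
which every CPT follows the linear edge-flow model — for each variable `X` the unfair
parents are `U_X = Pa X ∩ S`, the fair parents are `F_X = Pa X \ S`, and
`c X pa x = w_F(X) · p_F X (pa|_{F_X}) x + ∑_{A ∈ U_X} w_{A→X} · p_U X A (pa A) x`
with `p_F X (·)` and `p_U X A (·)` probability mass functions on `α X` and weights in
`[0,1]` summing to `1` — if the edge-unfairness weight `w_{A→X}` is zero for every unfair
edge `A→X`, then for every non-sensitive target `Y ∉ S` and value `y`, the interventional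
distribution is independent of the intervened value:
`P(Y=y | do(S=s)) = P(Y=y | do(S=s'))` for all assignments `s, s'` to `S`. -/
theorem zero_edge_unfairness_do_invariant
    {n : ℕ} (α : Fin n → Type) [∀ i, Fintype (α i)] [∀ i, Nonempty (α i)]
    (Pa : Fin n → Finset (Fin n))
    (hPa : ∀ i : Fin n, ∀ j ∈ Pa i, j < i)
    (c : ∀ i : Fin n, (∀ j, j ∈ Pa i → α j) → α i → ℝ)
    (hc_nonneg : ∀ (i : Fin n) (pa : ∀ j, j ∈ Pa i → α j) (x : α i), 0 ≤ c i pa x)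
    (hc_sum : ∀ (i : Fin n) (pa : ∀ j, j ∈ Pa i → α j), ∑ x : α i, c i pa x = 1)
    (S : Finset (Fin n))
    -- linear edge-flow model data: weights and edge flows
    (wF : Fin n → ℝ) (wU : Fin n → Fin n → ℝ)
    (pF : ∀ X : Fin n, (∀ j, j ∈ Pa X \ S → α j) → α X → ℝ)
    (pU : ∀ X A : Fin n, α A → α X → ℝ)
    (hpF_nonneg : ∀ (X : Fin n) (paf : ∀ j, j ∈ Pa X \ S → α j) (x : α X), 0 ≤ pF X paf x)
    (hpF_sum : ∀ (X : Fin n) (paf : ∀ j, j ∈ Pa X \ S → α j), ∑ x : α X, pF X paf x = 1)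
    (hpU_nonneg : ∀ (X A : Fin n) (a : α A) (x : α X), 0 ≤ pU X A a x)
    (hpU_sum : ∀ (X A : Fin n) (a : α A), ∑ x : α X, pU X A a x = 1)
    (hwF : ∀ X : Fin n, 0 ≤ wF X ∧ wF X ≤ 1)
    (hwU : ∀ X : Fin n, ∀ A ∈ Pa X ∩ S, 0 ≤ wU X A ∧ wU X A ≤ 1)
    (hw_sum : ∀ X : Fin n, wF X + ∑ A ∈ (Pa X ∩ S).attach, wU X A.1 = 1)
    -- every CPT follows the linear edge-flow model
    (hmodel : ∀ (X : Fin n) (pa : ∀ j, j ∈ Pa X → α j) (x : α X),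
      c X pa x =
        wF X * pF X (fun j hj => pa j (Finset.mem_sdiff.mp hj).1) x +
          ∑ A ∈ (Pa X ∩ S).attach,
            wU X A.1 * pU X A.1 (pa A.1 (Finset.mem_inter.mp A.2).1) x)
    -- the edge-unfairness weight vanishes on every unfair edge
    (hzero : ∀ X : Fin n, ∀ A ∈ Pa X ∩ S, wU X A = 0)
    (Y : Fin n) (hY : Y ∉ S) (y : α Y)
    (s s' : ∀ j, j ∈ S → α j) :
    doProb α Pa c S s Y y = doProb α Pa c S s' Y y := by
  have hc : ∀ (X : Fin n) (pa pa' : ∀ j, j ∈ Pa X → α j) (x : α X),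
      (∀ j (hj : j ∈ Pa X), j ∉ S → pa j hj = pa' j hj) → c X pa x = c X pa' x := by
    intro X pa pa' x h
    have hz : ∀ q : ∀ j, j ∈ Pa X → α j, ∑ A ∈ (Pa X ∩ S).attach,
        wU X A.1 * pU X A.1 (q A.1 (Finset.mem_inter.mp A.2).1) x = 0 := by
      intro q
      apply Finset.sum_eq_zero
      intro A _
      rw [hzero X A.1 A.2, zero_mul]
    rw [hmodel, hmodel, hz, hz]
    have : (fun j (hj : j ∈ Pa X \ S) => pa j (Finset.mem_sdiff.mp hj).1) =
        (fun j hj => pa' j (Finset.mem_sdiff.mp hj).1) := by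
      funext j hj
      exact h j _ (Finset.mem_sdiff.mp hj).2
    rw [this]
  let e : ∀ j : Fin n, α j ≃ α j := fun j =>
    if h : j ∈ S then Equiv.swap (s j h) (s' j h) else Equiv.refl _
  have he : ∀ j, j ∉ S → ∀ a, e j a = a := by
    intro j hj a
    simp [e, hj]
  have heS : ∀ j (h : j ∈ S) a, e j a = s' j h ↔ a = s j h := by
    intro j h a
    have h1 : e j = Equiv.swap (s j h) (s' j h) := by simp [e, h]
    rw [h1]
    have h2 := (Equiv.swap (s j h) (s' j h)).injective.eq_iff (a := a) (b := s j h)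
    rwa [Equiv.swap_apply_left] at h2
  unfold doProb
  refine Fintype.sum_equiv (Equiv.piCongrRight e) _ _ ?_
  intro v
  simp only [Equiv.piCongrRight_apply, Pi.map_apply, heS, he Y hY]
  congr 1
  apply Finset.prod_congr rfl
  intro i hi
  rw [he i (Finset.mem_compl.mp hi)]
  apply hc
  intro j _ hj
  exact (he j hj _).symm
end

section
/- (Theorem 4.) In a discrete causal Bayesian network in which every conditional probability table follows the linear edge-flow model, if the edge-unfairness weight w_{A→X} equals zero for every unfair edge A→X emanating from the sensitive set S, then the cumulative unfairness vanishes: for every non-sensitive target variable Y, every value y of Y, and every assignment s of values to S, C_{S=s, Y=y} = (1/N) · ∑_{s' ≠ s} ( P(Y=y | do(S=s)) − P(Y=y | do(S=s')) ) = 0, where N ≥ 1 is the number of assignments to S distinct from s. -/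
open scoped Classical

/-- Theorem 4: In a discrete causal Bayesian network in which every CPT
follows the linear edge-flow model (unfair parents `U_X = Pa X ∩ S`, fair parents
`F_X = Pa X \ S`, `c X pa x = w_F(X) · p_F X (pa|_{F_X}) x + ∑_{A ∈ U_X} w_{A→X} ·
p_U X A (pa A) x` with pmf edge flows and weights in `[0,1]` summing to `1`), if the
edge-unfairness weight `w_{A→X}` is zero for every unfair edge `A→X` emanating from the
sensitive set `S`, then the cumulative unfairness vanishes: for every non-sensitive `Y`,
value `y` and assignment `s` to `S`,
`C_{S=s,Y=y} = (1/N) · ∑_{s' ≠ s} (P(Y=y | do(S=s)) − P(Y=y | do(S=s'))) = 0`,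
where `N ≥ 1` is the number of assignments to `S` distinct from `s` (it is assumed `S`
has at least two distinct assignments). -/
theorem zero_edge_unfairness_cumulative_unfairness_vanishes
    {n : ℕ} (α : Fin n → Type) [∀ i, Fintype (α i)] [∀ i, Nonempty (α i)]
    (Pa : Fin n → Finset (Fin n))
    (hPa : ∀ i : Fin n, ∀ j ∈ Pa i, j < i)
    (c : ∀ i : Fin n, (∀ j, j ∈ Pa i → α j) → α i → ℝ)
    (hc_nonneg : ∀ (i : Fin n) (pa : ∀ j, j ∈ Pa i → α j) (x : α i), 0 ≤ c i pa x)
    (hc_sum : ∀ (i : Fin n) (pa : ∀ j, j ∈ Pa i → α j), ∑ x : α i, c i pa x = 1)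
    (S : Finset (Fin n))
    -- linear edge-flow model data: weights and edge flows
    (wF : Fin n → ℝ) (wU : Fin n → Fin n → ℝ)
    (pF : ∀ X : Fin n, (∀ j, j ∈ Pa X \ S → α j) → α X → ℝ)
    (pU : ∀ X A : Fin n, α A → α X → ℝ)
    (hpF_nonneg : ∀ (X : Fin n) (paf : ∀ j, j ∈ Pa X \ S → α j) (x : α X), 0 ≤ pF X paf x)
    (hpF_sum : ∀ (X : Fin n) (paf : ∀ j, j ∈ Pa X \ S → α j), ∑ x : α X, pF X paf x = 1)
    (hpU_nonneg : ∀ (X A : Fin n) (a : α A) (x : α X), 0 ≤ pU X A a x)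
    (hpU_sum : ∀ (X A : Fin n) (a : α A), ∑ x : α X, pU X A a x = 1)
    (hwF : ∀ X : Fin n, 0 ≤ wF X ∧ wF X ≤ 1)
    (hwU : ∀ X : Fin n, ∀ A ∈ Pa X ∩ S, 0 ≤ wU X A ∧ wU X A ≤ 1)
    (hw_sum : ∀ X : Fin n, wF X + ∑ A ∈ (Pa X ∩ S).attach, wU X A.1 = 1)
    -- every CPT follows the linear edge-flow model
    (hmodel : ∀ (X : Fin n) (pa : ∀ j, j ∈ Pa X → α j) (x : α X),
      c X pa x =
        wF X * pF X (fun j hj => pa j (Finset.mem_sdiff.mp hj).1) x +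
          ∑ A ∈ (Pa X ∩ S).attach,
            wU X A.1 * pU X A.1 (pa A.1 (Finset.mem_inter.mp A.2).1) x)
    -- the edge-unfairness weight vanishes on every unfair edge emanating from S
    (hzero : ∀ X : Fin n, ∀ A ∈ Pa X ∩ S, wU X A = 0)
    (Y : Fin n) (hY : Y ∉ S) (y : α Y)
    (s : ∀ j, j ∈ S → α j)
    -- `S` has at least two distinct assignments, i.e. `N ≥ 1`
    (hN : 1 ≤ (Finset.univ.filter
      (fun s' : ∀ j, j ∈ S → α j => s' ≠ s)).card) :
    (1 / ((Finset.univ.filter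
        (fun s' : ∀ j, j ∈ S → α j => s' ≠ s)).card : ℝ)) *
      ∑ s' ∈ Finset.univ.filter (fun s' : ∀ j, j ∈ S → α j => s' ≠ s),
        (doProb α Pa c S s Y y - doProb α Pa c S s' Y y) = 0 := by
  have hc : ∀ (X : Fin n) (pa pa' : ∀ j, j ∈ Pa X → α j) (x : α X),
      (∀ j (h : j ∈ Pa X), j ∉ S → pa j h = pa' j h) → c X pa x = c X pa' x := by
    intro X pa pa' x h
    rw [hmodel, hmodel]
    have e : (fun j (hj : j ∈ Pa X \ S) => pa j (Finset.mem_sdiff.mp hj).1) =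
        (fun j hj => pa' j (Finset.mem_sdiff.mp hj).1) := by
      funext j hj
      exact h j _ (Finset.mem_sdiff.mp hj).2
    rw [e]
    congr 1
    refine Finset.sum_congr rfl fun A _ => ?_
    rw [hzero X A.1 A.2, zero_mul, zero_mul]
  have key : ∀ s' : ∀ j, j ∈ S → α j, doProb α Pa c S s Y y = doProb α Pa c S s' Y y := by
    intro s'
    unfold doProb
    rw [← Finset.sum_filter, ← Finset.sum_filter]
    refine Finset.sum_bij' (fun v _ j => if h : j ∈ S then s' j h else v j)
      (fun v _ j => if h : j ∈ S then s j h else v j) ?_ ?_ ?_ ?_ ?_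
    · intro v hv
      simp only [Finset.mem_filter, Finset.mem_univ, true_and] at hv ⊢
      refine ⟨fun j h => by simp [h], by simp [hY, hv.2]⟩
    · intro v hv
      simp only [Finset.mem_filter, Finset.mem_univ, true_and] at hv ⊢
      refine ⟨fun j h => by simp [h], by simp [hY, hv.2]⟩
    · intro v hv
      simp only [Finset.mem_filter, Finset.mem_univ, true_and] at hv
      funext j
      by_cases h : j ∈ S
      · simp [h, hv.1 j h]
      · simp [h]
    · intro v hv
      simp only [Finset.mem_filter, Finset.mem_univ, true_and] at hv
      funext j
      by_cases h : j ∈ S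
      · simp [h, hv.1 j h]
      · simp [h]
    · intro v hv
      refine Finset.prod_congr rfl fun i hi => ?_
      have hi' : i ∉ S := Finset.mem_compl.mp hi
      beta_reduce
      rw [dif_neg hi']
      apply hc
      intro j _ hj
      rw [dif_neg hj]
  rw [Finset.sum_eq_zero (fun s' _ => by rw [key s', sub_self]), mul_zero]
end

section
/- (The truncated factorization defines a probability distribution.) Let variables be indexed by Fin n with variable i taking values in a finite nonempty type α i, let Pa i ⊆ {j : j < i} for each i, and for each i let c i be a conditional probability table: for every assignment pa of values to Pa i, c i pa x ≥ 0 for all x : α i and ∑_x c i pa x = 1. Then for every subset S of the variables and every assignment s of values to S, the truncated factorization has total mass one: ∑ over full assignments v with v restricted to S equal to s of ∏_{i ∉ S} c i (v restricted to Pa i) (v i) = 1. (In particular, taking S = ∅, the joint distribution ∏_i c i (v restricted to Pa i)(v i) sums to 1 over all assignments v.) -/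
open scoped Classical

/-- Generic telescoping: a product of kernels adapted to the order sums to one. -/
theorem sum_prod_adapted_eq_one : ∀ {n : ℕ} (α : Fin n → Type) [∀ i, Fintype (α i)]
    [∀ i, Nonempty (α i)] (g : Fin n → (∀ j, α j) → ℝ)
    (_hdep : ∀ i v w, (∀ j, j ≤ i → v j = w j) → g i v = g i w)
    (_hsum : ∀ i v, ∑ x : α i, g i (Function.update v i x) = 1),
    ∑ v : ∀ j, α j, ∏ i, g i v = 1 := by
  intro n
  induction n with
  | zero => intro α _ _ g _ _; simp
  | succ n ih =>
    intro α _ _ g hdep hsum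
    obtain ⟨d⟩ : Nonempty (α (Fin.last n)) := inferInstance
    rw [← (Fin.snocEquiv α).sum_comp, Fintype.sum_prod_type_right]
    have key := ih (fun i => α i.castSucc) (fun i w => g i.castSucc (Fin.snoc w d)) (by
        intro i v w h
        apply hdep
        intro j
        refine Fin.lastCases ?_ (fun k => ?_) j
        · intro _; simp
        · intro hk; simpa using h k (by simpa using hk))
      (by
        intro i v
        have := hsum i.castSucc (Fin.snoc v d)
        simpa only [Fin.snoc_update] using this)
    rw [← key]
    refine Finset.sum_congr rfl fun w _ => ?_
    have h1 : ∀ x : α (Fin.last n), ∏ i, g i (Fin.snocEquiv α (x, w))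
        = (∏ i : Fin n, g i.castSucc (Fin.snoc w d)) * g (Fin.last n) (Fin.snoc w x) := by
      intro x
      rw [Fin.prod_univ_castSucc]
      congr 1
      refine Finset.prod_congr rfl fun i _ => ?_
      apply hdep
      intro j
      refine Fin.lastCases ?_ (fun k => ?_) j
      · intro h
        exact absurd h (not_le.mpr (Fin.castSucc_lt_last i))
      · intro _; simp [Fin.snocEquiv]
    simp only [h1]
    rw [← Finset.mul_sum]
    have h2 := hsum (Fin.last n) (Fin.snoc w d)
    simp only [Fin.update_snoc_last] at h2
    rw [h2, mul_one]

/-- The truncated factorization defines a probability distribution.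
Variables are indexed by `Fin n`, variable `i` takes values in a finite nonempty type
`α i`, the parent set `Pa i` is contained in `{j | j < i}` (acyclicity via the topological
order), and each `c i` is a conditional probability table: nonnegative and summing to `1`
over the values of variable `i`, for every assignment of values to `Pa i`.  Then for every
subset `S` of the variables and every assignment `s` of values to `S`, the truncated
factorization `∑_{v : v|_S = s} ∏_{i ∉ S} c i (v|_{Pa i}) (v i)` equals `1`. -/
theorem truncated_factorization_total_mass_one
    {n : ℕ} (α : Fin n → Type) [∀ i, Fintype (α i)] [∀ i, Nonempty (α i)]
    (Pa : Fin n → Finset (Fin n))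
    (hPa : ∀ i : Fin n, ∀ j ∈ Pa i, j < i)
    (c : ∀ i : Fin n, (∀ j, j ∈ Pa i → α j) → α i → ℝ)
    (hc_nonneg : ∀ (i : Fin n) (pa : ∀ j, j ∈ Pa i → α j) (x : α i), 0 ≤ c i pa x)
    (hc_sum : ∀ (i : Fin n) (pa : ∀ j, j ∈ Pa i → α j), ∑ x : α i, c i pa x = 1)
    (S : Finset (Fin n)) (s : ∀ j, j ∈ S → α j) :
    (∑ v : ∀ j : Fin n, α j,
        if (∀ j (h : j ∈ S), v j = s j h)
        then ∏ i ∈ Sᶜ, c i (fun j _ => v j) (v i) else 0) = 1 := by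
  have key := sum_prod_adapted_eq_one α
    (fun i v => if h : i ∈ S then (if v i = s i h then 1 else 0) else c i (fun j _ => v j) (v i))
    (by
      intro i v w h
      have h1 : (fun j (_ : j ∈ Pa i) => v j) = fun j _ => w j := by
        funext j hj
        exact h j (hPa i j hj).le
      simp only [h1, h i le_rfl])
    (by
      intro i v
      by_cases h : i ∈ S
      · simp [h]
      · have h1 : ∀ x, (fun j (_ : j ∈ Pa i) => Function.update v i x j) = fun j _ => v j := by
          intro x
          funext j hj
          exact Function.update_of_ne (hPa i j hj).ne _ _
        simp only [h, dif_neg, not_false_eq_true, h1, Function.update_self]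
        exact hc_sum i _)
  rw [← key]
  refine Finset.sum_congr rfl fun v _ => ?_
  split_ifs with hv
  · rw [← Finset.prod_mul_prod_compl S, Finset.prod_eq_one (s := S), one_mul]
    · refine Finset.prod_congr rfl fun i hi => ?_
      rw [dif_neg (Finset.mem_compl.mp hi)]
    · intro i hi
      rw [dif_pos hi, if_pos (hv i hi)]
  · push Not at hv
    obtain ⟨j, hj, hne⟩ := hv
    symm
    apply Finset.prod_eq_zero (Finset.mem_univ j)
    rw [dif_pos hj, if_neg hne]
end
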